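/- In the group U, the subgroup K = ⟨z, w⟩ generated by z = (bc^{-1})^4 and w = (c^{-1}b)^4 is free abelian of rank 2; that is, K is isomorphic to Z ⊕ Z, with {z, w} a free generating set. -/

import Mathlib

/-- The defining relators of the group `U` on generators `a, b, c` (indexed `0, 1, 2`):
`a^4, b^4, c^4, (ab)^2, (bc)^2, (abc)^2, (a^2b^2)^4, a^2c^2b^2(ac)^2, [a,c⁻¹]b^2`,
where `[x,y] = x⁻¹y⁻¹xy`. -/
def Urels : Set (FreeGroup (Fin 3)) :=
  {(FreeGroup.of 0) ^ 4, (FreeGroup.of 1) ^ 4, (FreeGroup.of 2) ^ 4,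
   (FreeGroup.of 0 * FreeGroup.of 1) ^ 2,
   (FreeGroup.of 1 * FreeGroup.of 2) ^ 2,
   (FreeGroup.of 0 * FreeGroup.of 1 * FreeGroup.of 2) ^ 2,
   ((FreeGroup.of 0) ^ 2 * (FreeGroup.of 1) ^ 2) ^ 4,
   (FreeGroup.of 0) ^ 2 * (FreeGroup.of 2) ^ 2 * (FreeGroup.of 1) ^ 2 *
     (FreeGroup.of 0 * FreeGroup.of 2) ^ 2,
   (FreeGroup.of 0)⁻¹ * FreeGroup.of 2 * FreeGroup.of 0 * (FreeGroup.of 2)⁻¹ *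
     (FreeGroup.of 1) ^ 2}

/-- The finitely presented group `U`. -/
abbrev UGroup : Type := PresentedGroup Urels

/-- The generator `a` of `U`. -/
def Ua : UGroup := PresentedGroup.of 0

/-- The generator `b` of `U`. -/
def Ub : UGroup := PresentedGroup.of 1

/-- The generator `c` of `U`. -/
def Uc : UGroup := PresentedGroup.of 2

/-- The element `z = (bc⁻¹)^4` of `U`. -/
def Uz : UGroup := (Ub * Uc⁻¹) ^ 4

/-- The element `w = (c⁻¹b)^4` of `U`. -/
def Uw : UGroup := (Uc⁻¹ * Ub) ^ 4

/-!
The group `U` acts on the lattice `ℤ × ℤ`: `a` is the reflection in the line `x = 1 / 2`, `c` a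
quarter turn about the origin and `b` the quarter turn `c` followed by the translation by `(1, 0)`.
Under this action `bc⁻¹` and `c⁻¹b` become the two unit translations, so `z` and `w` become the
independent translations by `(4, 0)` and `(0, 4)`. On the other hand `bc⁻¹` and `c⁻¹b` commute
already in `U`, because `b ^ 4 = c ^ 4 = (bc) ^ 2 = 1`.
-/

section CommutingPair

variable {G : Type*} [Group G] {x y : G}

/-- The homomorphism `(m, n) ↦ x ^ m * y ^ n` from `ℤ × ℤ`, written multiplicatively, to a group
in which `x` and `y` commute. It presents `⟨x, y⟩` as a quotient of the free abelian group of
rank two. -/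
def zpowPairHom (h : Commute x y) : Multiplicative (ℤ × ℤ) →* G :=
  ((zpowersHom G x).noncommCoprod (zpowersHom G y) fun m n => by
    simpa only [zpowersHom_apply] using h.zpow_zpow m.toAdd n.toAdd).comp
    (MulEquiv.prodMultiplicative ℤ ℤ).toMonoidHom

lemma zpowPairHom_apply (h : Commute x y) (p : Multiplicative (ℤ × ℤ)) :
    zpowPairHom h p = x ^ p.toAdd.1 * y ^ p.toAdd.2 := rfl

lemma range_zpowPairHom (h : Commute x y) :
    (zpowPairHom h).range = Subgroup.closure {x, y} := by
  rw [zpowPairHom, MonoidHom.range_comp, MulEquiv.toMonoidHom_eq_coe, MulEquiv.range_eq_top,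
    ← MonoidHom.range_eq_map, MonoidHom.noncommCoprod_range, Subgroup.range_zpowersHom,
    Subgroup.range_zpowersHom, Subgroup.zpowers_eq_closure, Subgroup.zpowers_eq_closure,
    ← Subgroup.closure_union, Set.singleton_union]

lemma zpowPairHom_injective_of_linearIndependent {H A : Type*} [Group H] [AddCommGroup A]
    (h : Commute x y) (φ : G →* H) {τ : Multiplicative A →* H} (hτ : Function.Injective τ)
    {u v : A} (hx : φ x = τ (.ofAdd u)) (hy : φ y = τ (.ofAdd v))
    (huv : LinearIndependent ℤ ![u, v]) : Function.Injective (zpowPairHom h) := by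
  refine (injective_iff_map_eq_one _).2 fun p hp => ?_
  have image_eq : τ (.ofAdd (p.toAdd.1 • u + p.toAdd.2 • v)) = 1 := by
    rw [ofAdd_add, ofAdd_zsmul, ofAdd_zsmul, map_mul, map_zpow, map_zpow, ← hx, ← hy,
      ← map_zpow, ← map_zpow, ← map_mul, ← zpowPairHom_apply h, hp, map_one]
  have relation : p.toAdd.1 • u + p.toAdd.2 • v = 0 :=
    ofAdd_eq_one.1 ((map_eq_one_iff τ hτ).1 image_eq)
  obtain ⟨hm, hn⟩ := LinearIndependent.pair_iff.1 huv _ _ relation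
  exact Multiplicative.toAdd.injective (Prod.ext hm hn)

end CommutingPair

lemma inv_sq_eq_sq_of_pow_four_eq_one {G : Type*} [Group G] {g : G} (hg : g ^ 4 = 1) :
    (g ^ 2)⁻¹ = g ^ 2 :=
  inv_eq_of_mul_eq_one_right (by rw [← pow_add, hg])

lemma commute_mul_inv_inv_mul {G : Type*} [Group G] {b c : G} (hb : b ^ 4 = 1) (hc : c ^ 4 = 1)
    (hbc : (b * c) ^ 2 = 1) : Commute (b * c⁻¹) (c⁻¹ * b) := by
  have bc_eq_inv : b * c = (b * c)⁻¹ := eq_inv_of_mul_eq_one_left (by rw [← sq, hbc])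
  have cb_eq_inv : c * b = (c * b)⁻¹ :=
    calc c * b = b⁻¹ * (b * c) * b := by group
      _ = b⁻¹ * (b * c)⁻¹ * b := by rw [← bc_eq_inv]
      _ = (c * b)⁻¹ := by group
  calc b * c⁻¹ * (c⁻¹ * b) = b * (c ^ 2)⁻¹ * b := by group
    _ = (b * c) * (c * b) := by rw [inv_sq_eq_sq_of_pow_four_eq_one hc, sq]; group
    _ = (b * c)⁻¹ * (c * b)⁻¹ := by rw [← bc_eq_inv, ← cb_eq_inv]
    _ = c⁻¹ * (b ^ 2)⁻¹ * c⁻¹ := by group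
    _ = c⁻¹ * b * (b * c⁻¹) := by rw [inv_sq_eq_sq_of_pow_four_eq_one hb, sq]; group

lemma Ub_pow_four : Ub ^ 4 = 1 :=
  PresentedGroup.one_of_mem (x := FreeGroup.of 1 ^ 4) (by simp [Urels])

lemma Uc_pow_four : Uc ^ 4 = 1 :=
  PresentedGroup.one_of_mem (x := FreeGroup.of 2 ^ 4) (by simp [Urels])

lemma Ub_mul_Uc_sq : (Ub * Uc) ^ 2 = 1 :=
  PresentedGroup.one_of_mem (x := (FreeGroup.of 1 * FreeGroup.of 2) ^ 2) (by simp [Urels])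

lemma commute_Uz_Uw : Commute Uz Uw :=
  (commute_mul_inv_inv_mul Ub_pow_four Uc_pow_four Ub_mul_Uc_sq).pow_pow 4 4

section Translation

variable (A : Type*) [AddGroup A]

/-- The action of an additive group on itself by translations `p ↦ v + p`, as permutations. The
source is written multiplicatively so that this is a homomorphism of groups. -/
def translationHom : Multiplicative A →* Equiv.Perm A :=
  MulAction.toPermHom (Multiplicative A) A

variable {A}

lemma translationHom_apply (v p : A) : translationHom A (.ofAdd v) p = v + p := rfl

lemma translationHom_injective : Function.Injective (translationHom A) := fun _ _ h =>
  Multiplicative.toAdd.injective (add_right_cancel (b := 0) (DFunLike.congr_fun h 0))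

end Translation

/-- The reflection `(x, y) ↦ (1 - x, y)` of the lattice, through which the generator `a` acts. -/
def latticeReflection : Equiv.Perm (ℤ × ℤ) :=
  (Equiv.subLeft 1).prodCongr (Equiv.refl ℤ)

/-- The clockwise quarter turn `(x, y) ↦ (y, -x)` of the lattice about the origin, through which
the generator `c` acts. -/
def latticeRotation : Equiv.Perm (ℤ × ℤ) :=
  (Equiv.prodComm ℤ ℤ).trans ((Equiv.refl ℤ).prodCongr (Equiv.neg ℤ))

lemma latticeReflection_apply (p : ℤ × ℤ) : latticeReflection p = (1 - p.1, p.2) := rfl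

lemma latticeReflection_symm_apply (p : ℤ × ℤ) : latticeReflection.symm p = (1 - p.1, p.2) :=
  Prod.ext (neg_add_eq_sub p.1 1) rfl

lemma latticeRotation_apply (p : ℤ × ℤ) : latticeRotation p = (p.2, -p.1) := rfl

lemma latticeRotation_symm_apply (p : ℤ × ℤ) : latticeRotation.symm p = (-p.2, p.1) := rfl

/-- The permutations of the lattice through which `a`, `b` and `c` act, in this order. -/
def latticeGenerators : Fin 3 → Equiv.Perm (ℤ × ℤ) :=
  ![latticeReflection, translationHom (ℤ × ℤ) (.ofAdd (1, 0)) * latticeRotation, latticeRotation]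

lemma lift_latticeGenerators_eq_one :
    ∀ r ∈ Urels, FreeGroup.lift latticeGenerators r = 1 := by
  intro r hr
  simp only [Urels, Set.mem_insert_iff, Set.mem_singleton_iff] at hr
  rcases hr with rfl | rfl | rfl | rfl | rfl | rfl | rfl | rfl | rfl <;>
  · ext p <;>
    simp [latticeGenerators, pow_succ, latticeReflection_apply, latticeReflection_symm_apply,
      translationHom_apply, latticeRotation_apply, latticeRotation_symm_apply]

/-- The action of `U` on the lattice `ℤ × ℤ`. -/
def latticeAction : UGroup →* Equiv.Perm (ℤ × ℤ) :=
  PresentedGroup.toGroup lift_latticeGenerators_eq_one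

lemma latticeAction_Ub :
    latticeAction Ub = translationHom (ℤ × ℤ) (.ofAdd (1, 0)) * latticeRotation :=
  PresentedGroup.toGroup.of _

lemma latticeAction_Uc : latticeAction Uc = latticeRotation :=
  PresentedGroup.toGroup.of _

lemma latticeAction_Uz : latticeAction Uz = translationHom (ℤ × ℤ) (.ofAdd (4, 0)) := by
  have unit_translation :
      latticeAction (Ub * Uc⁻¹) = translationHom (ℤ × ℤ) (.ofAdd (1, 0)) := by
    rw [map_mul, map_inv, latticeAction_Ub, latticeAction_Uc, mul_inv_cancel_right]
  rw [Uz, map_pow, unit_translation, ← map_pow, ← ofAdd_nsmul]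
  rfl

lemma latticeAction_Uw : latticeAction Uw = translationHom (ℤ × ℤ) (.ofAdd (0, 4)) := by
  have unit_translation :
      latticeAction (Uc⁻¹ * Ub) = translationHom (ℤ × ℤ) (.ofAdd (0, 1)) := by
    rw [map_mul, map_inv, latticeAction_Ub, latticeAction_Uc]
    ext p <;> simp [translationHom_apply, latticeRotation_apply, latticeRotation_symm_apply]
  rw [Uw, map_pow, unit_translation, ← map_pow, ← ofAdd_nsmul]
  rfl

/-- The subgroup `K = ⟨z, w⟩` of `U` is free abelian of rank 2, with `{z, w}` a free
generating set: there is an injective homomorphism from `ℤ ⊕ ℤ` into `U` sending the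
two free generators to `z` and `w`, whose range is `K`. -/
theorem K_free_abelian_rank_two :
    ∃ f : Multiplicative (ℤ × ℤ) →* UGroup,
      Function.Injective f ∧
      f (Multiplicative.ofAdd ((1 : ℤ), (0 : ℤ))) = Uz ∧
      f (Multiplicative.ofAdd ((0 : ℤ), (1 : ℤ))) = Uw ∧
      f.range = Subgroup.closure {Uz, Uw} := by
  have independent : LinearIndependent ℤ ![((4, 0) : ℤ × ℤ), (0, 4)] :=
    LinearIndependent.pair_iff.2 fun m n h => by simpa using h
  refine ⟨zpowPairHom commute_Uz_Uw, ?_, ?_, ?_, range_zpowPairHom commute_Uz_Uw⟩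
  · exact zpowPairHom_injective_of_linearIndependent commute_Uz_Uw latticeAction
      translationHom_injective latticeAction_Uz latticeAction_Uw independent
  · simp [zpowPairHom_apply]
  · simp [zpowPairHom_apply]
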